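/- A successful forgery against the H-DL hash yields a hash collision: let v̂_1, …, v̂_m ∈ (ZMod q)^n with honest hashes h_i = hash(v̂_i). If ŷ ∈ (ZMod q)^n satisfies ŷ ∉ span(v̂_1, …, v̂_m) and the test Π_j g_j^{(ŷ_j).val} = Π_i h_i^{(β_i).val} passes for some β ∈ (ZMod q)^m, then setting v̂ = Σ_i β_i · v̂_i one has ŷ ≠ v̂ and hash(ŷ) = hash(v̂), i.e. two distinct vectors with equal hash. -/

import Mathlib

/-!
If `g_j ^ q = 1` for all `j`, exponents of the `g_j` only matter modulo `q`, so the hash carries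
linear combinations over `ZMod q` to products of powers. The verifier therefore compares
`hash ŷ` with the hash of a vector in the span of the honest data, and a forged `ŷ` lies
outside that span.
-/

section PowVal

variable {M : Type*} {q : ℕ} {x : M}

theorem pow_val_natCast_of_pow_eq_one [Monoid M] (hx : x ^ q = 1) (k : ℕ) :
    x ^ (k : ZMod q).val = x ^ k := by
  rw [ZMod.val_natCast, ← pow_eq_pow_mod k hx]

theorem pow_val_mul_of_pow_eq_one [Monoid M] (hx : x ^ q = 1) (a b : ZMod q) :
    x ^ (a * b).val = (x ^ a.val) ^ b.val := by
  rw [ZMod.val_mul, ← pow_eq_pow_mod _ hx, pow_mul]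

theorem pow_val_sum_of_pow_eq_one [CommMonoid M] [NeZero q] {κ : Type*} (hx : x ^ q = 1)
    (s : Finset κ) (a : κ → ZMod q) :
    x ^ (∑ i ∈ s, a i).val = ∏ i ∈ s, x ^ (a i).val := by
  have sum_eq_natCast : ∑ i ∈ s, a i = ((∑ i ∈ s, (a i).val : ℕ) : ZMod q) := by
    simp only [Nat.cast_sum, ZMod.natCast_zmod_val]
  rw [sum_eq_natCast, pow_val_natCast_of_pow_eq_one hx, Finset.prod_pow_eq_pow_sum]

end PowVal

/-- The H-DL homomorphic hash of the data vector `v` with respect to the family `g`. An exponent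
in `ZMod q` is read as its natural-number representative (its absolute value if `q = 0`). -/
def hdlHash {M ι : Type*} [CommMonoid M] [Fintype ι] {q : ℕ} (g : ι → M) (v : ι → ZMod q) : M :=
  ∏ j, g j ^ (v j).val

section HdlHash

variable {M ι κ : Type*} [CommMonoid M] [Fintype ι] {q : ℕ} {g : ι → M}

theorem hdlHash_smul (hg : ∀ j, g j ^ q = 1) (c : ZMod q) (v : ι → ZMod q) :
    hdlHash g (c • v) = hdlHash g v ^ c.val := by
  simp only [hdlHash, Pi.smul_apply, smul_eq_mul, mul_comm c,
    pow_val_mul_of_pow_eq_one (hg _), Finset.prod_pow]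

theorem hdlHash_sum [NeZero q] (hg : ∀ j, g j ^ q = 1) (s : Finset κ) (v : κ → ι → ZMod q) :
    hdlHash g (∑ i ∈ s, v i) = ∏ i ∈ s, hdlHash g (v i) := by
  simp only [hdlHash, Finset.sum_apply, pow_val_sum_of_pow_eq_one (hg _)]
  exact Finset.prod_comm

theorem hdlHash_sum_smul [NeZero q] (hg : ∀ j, g j ^ q = 1) (s : Finset κ)
    (c : κ → ZMod q) (v : κ → ι → ZMod q) :
    hdlHash g (∑ i ∈ s, c i • v i) = ∏ i ∈ s, hdlHash g (v i) ^ (c i).val := by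
  simp only [hdlHash_sum hg, hdlHash_smul hg]

end HdlHash

theorem ne_sum_smul_of_notMem_span_range {R V κ : Type*} [Semiring R] [AddCommMonoid V]
    [Module R V] {v : κ → V} {y : V} (hy : y ∉ Submodule.span R (Set.range v))
    (s : Finset κ) (c : κ → R) : y ≠ ∑ i ∈ s, c i • v i := by
  rintro rfl
  exact hy <| Submodule.sum_smul_mem _ c fun i _ => Submodule.subset_span (Set.mem_range_self i)

theorem hdl_forgery_gives_collision_general {M ι κ : Type*} [CommMonoid M] [Fintype ι]
    [Fintype κ] {q : ℕ} [NeZero q] {g : ι → M} (hg : ∀ j, g j ^ q = 1)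
    {v : κ → ι → ZMod q} {y : ι → ZMod q} {β : κ → ZMod q}
    (hy : y ∉ Submodule.span (ZMod q) (Set.range v))
    (htest : hdlHash g y = ∏ i, hdlHash g (v i) ^ (β i).val) :
    y ≠ ∑ i, β i • v i ∧ hdlHash g y = hdlHash g (∑ i, β i • v i) :=
  ⟨ne_sum_smul_of_notMem_span_range hy _ β,
    htest.trans (hdlHash_sum_smul hg _ β v).symm⟩

/-- a successful forgery against the H-DL hash yields a hash collision.
If `ŷ ∉ span(v̂_1, …, v̂_m)` and the test `Π_j g_j^(ŷ_j).val = Π_i h_i^(β_i).val`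
passes (where `h_i = hash(v̂_i)`), then with `v̂ = Σ_i β_i • v̂_i` we have `ŷ ≠ v̂`
and `hash(ŷ) = hash(v̂)`: two distinct vectors with equal hash. -/
theorem hdl_forgery_gives_collision {G : Type*} [CommGroup G] [Fintype G]
    (q n m : ℕ) (hq : q.Prime) (hcard : Fintype.card G = q)
    (gg : Fin n → G) (vhat : Fin m → Fin n → ZMod q)
    (yhat : Fin n → ZMod q) (β : Fin m → ZMod q)
    (hy : yhat ∉ Submodule.span (ZMod q) (Set.range vhat))
    (htest : (∏ j : Fin n, gg j ^ (yhat j).val)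
      = ∏ i : Fin m, (∏ j : Fin n, gg j ^ (vhat i j).val) ^ (β i).val) :
    yhat ≠ (∑ i : Fin m, β i • vhat i) ∧
      (∏ j : Fin n, gg j ^ (yhat j).val)
        = ∏ j : Fin n, gg j ^ (((∑ i : Fin m, β i • vhat i) j)).val := by
  have : NeZero q := ⟨hq.ne_zero⟩
  exact hdl_forgery_gives_collision_general (fun j => hcard ▸ pow_card_eq_one) hy htest
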